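/- Let f = x^b + B_{b−2}x^{b−2} + ⋯ + B_1x + B_0 ∈ S[x] with b ≥ 2 and B_i ∈ S for all i. Then the Rees algebra Diff(S[x][fW^b]) ∩ S[W] over S (the elimination algebra of the hypersurface V(f) relative to the projection forgetting x) coincides, up to integral closure, with Diff_S(S[B_{b−2}W^2, B_{b−3}W^3, …, B_0W^b]): these two Rees algebras over S have the same integral closure inside Frac(S)[W]. -/

import Mathlib

open Polynomial
open scoped ENNReal

noncomputable section

namespace NashMult

/-- The `m`-adic order `ν(f)` of an element `f` of a ring: the largest `n` with `f ∈ m ^ n`. -/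
def adicOrder {R : Type*} [CommRing R] (m : Ideal R) (f : R) : ℕ :=
  sSup {n : ℕ | f ∈ m ^ n}

/-- A subalgebra `G ⊆ R[W]` is *graded* if it is spanned by its "monomials", i.e. it is closed
under taking homogeneous components.  This is the condition expressing that `G = ⊕ I_l W^l`
for a family of ideals `I_l` (with `I_0 = R` and `I_i · I_j ⊆ I_{i+j}` automatic). -/
def Graded {R : Type*} [CommRing R] (G : Subalgebra R (Polynomial R)) : Prop :=
  ∀ p ∈ G, ∀ n : ℕ, (C (p.coeff n) * X ^ n : Polynomial R) ∈ G

/-- A *Rees algebra* over `R`: a finitely generated graded subalgebra of `R[W]`. -/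
def IsReesAlgebra {R : Type*} [CommRing R] (G : Subalgebra R (Polynomial R)) : Prop :=
  G.FG ∧ Graded G

/-- The order of (the Rees algebra) `G` at the closed point of the local ring `(R, m)`:
`ord(G) = inf { ν(f)/n : f W^n a homogeneous element of G, n ≥ 1, f ≠ 0 }`
(with value `∞` for the empty infimum). -/
def reesOrder {R : Type*} [CommRing R] (m : Ideal R) (G : Subalgebra R (Polynomial R)) : ℝ≥0∞ :=
  sInf {q : ℝ≥0∞ | ∃ (f : R) (n : ℕ), f ≠ 0 ∧ 1 ≤ n ∧ (C f * X ^ n : Polynomial R) ∈ G ∧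
    q = (adicOrder m f : ℝ≥0∞) / (n : ℝ≥0∞)}

/-- `G = ⊕ I_l W^l` is *differentially closed* relative to a family `D` of derivations if
`I_{l+1} ⊆ I_l` and `D_j (I_l) ⊆ I_{l-1}` for all `l ≥ 1` and all `j`. -/
def DiffClosed {k R ι : Type*} [CommRing k] [CommRing R] [Algebra k R]
    (D : ι → Derivation k R R) (G : Subalgebra R (Polynomial R)) : Prop :=
  (∀ (f : R) (l : ℕ), 1 ≤ l → (C f * X ^ (l + 1) : Polynomial R) ∈ G →
      (C f * X ^ l : Polynomial R) ∈ G) ∧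
  (∀ (f : R) (l : ℕ) (j : ι), (C f * X ^ (l + 1) : Polynomial R) ∈ G →
      (C (D j f) * X ^ l : Polynomial R) ∈ G)

/-- `Diff(M)`: the smallest graded differentially closed subalgebra of `R[W]` containing the
set `M`. -/
def diffClosure {k R ι : Type*} [CommRing k] [CommRing R] [Algebra k R]
    (D : ι → Derivation k R R) (M : Set (Polynomial R)) : Subalgebra R (Polynomial R) :=
  sInf {G : Subalgebra R (Polynomial R) | M ⊆ ↑G ∧ Graded G ∧ DiffClosed D G}

/-- The image `ψ(G)` of a Rees algebra `G` over `R` under a homomorphism (arc) `ψ : R → K⟦t⟧`: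
the Rees algebra over `K⟦t⟧` generated by all `ψ(g) W^l` for `g W^l` a homogeneous element of
`G` with `ψ(g) ≠ 0`. -/
def arcImage {R A : Type*} [CommRing R] [CommRing A] (ψ : R → A)
    (G : Subalgebra R (Polynomial R)) : Subalgebra A (Polynomial A) :=
  Algebra.adjoin A {p : Polynomial A | ∃ (g : R) (l : ℕ),
    (C g * X ^ l : Polynomial R) ∈ G ∧ ψ g ≠ 0 ∧ p = C (ψ g) * X ^ l}

/-- The order `ord(ψ)` of an arc `ψ : R → K⟦t⟧`: the largest `n` such that
`ψ(m) ⊆ t^n` (`t` being the ideal `tI`). -/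
def homOrd {R A : Type*} [CommRing R] [CommRing A] (m : Ideal R) (tI : Ideal A)
    (ψ : R → A) : ℕ :=
  sSup {n : ℕ | ∀ s ∈ m, ψ s ∈ tI ^ n}

/-- The maximal ideal `(t)` of `K⟦t⟧`. -/
def tId (K : Type*) [CommRing K] : Ideal (PowerSeries K) :=
  Ideal.span {(PowerSeries.X : PowerSeries K)}

/-- The `t`-adic order on `K⟦t⟧`. -/
def tOrd {K : Type*} [CommRing K] (g : PowerSeries K) : ℕ :=
  adicOrder (tId K) g

/-- The family of ideals `I_l` of the graded algebra `G = ⊕ I_l W^l`. -/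
def idealFam {R : Type*} [CommRing R] (G : Subalgebra R (Polynomial R)) (l : ℕ) : Ideal R :=
  Submodule.comap (Polynomial.monomial l : R →ₗ[R] Polynomial R) (Subalgebra.toSubmodule G)

/-- The closed point of the local ring `(R, m)` belongs to the singular locus of
`G = ⊕ I_l W^l`, i.e. `ν(I_l) ≥ l` for all `l ≥ 1`. -/
def SingFam {R : Type*} [CommRing R] (m : Ideal R) (I : ℕ → Ideal R) : Prop :=
  ∀ l : ℕ, 1 ≤ l → I l ≤ m ^ l

/-- The transform `⊕ (I_l · T^{-l}) W^l` of a Rees algebra `⊕ I_l W^l` over a DVR with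
uniformizer `T` (when the closed point lies in the singular locus, `I_l ⊆ (T^l)` and
`I_l · T^{-l} = (I_l : (T^l))`). -/
def transformFam {R : Type*} [CommRing R] (T : R) (I : ℕ → Ideal R) : ℕ → Ideal R :=
  fun l => (I l).colon (Ideal.span {T ^ l})

/-- The persistance: the least number `κ` of transforms needed so that the closed point no
longer lies in the singular locus. -/
def persist {R : Type*} [CommRing R] (m : Ideal R) (T : R)
    (G : Subalgebra R (Polynomial R)) : ℕ :=
  sInf {κ : ℕ | ¬ SingFam m ((transformFam T)^[κ] (idealFam G))}

/-- The set of elements of a ring integral over a subset `s` (monic equation with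
coefficients in `s`). -/
def intClos {A : Type*} [CommRing A] (s : Set A) : Set A :=
  {p : A | ∃ q : Polynomial A, q.Monic ∧ (∀ n, q.coeff n ∈ s) ∧ Polynomial.eval p q = 0}


/-- The monic polynomial `f = x^b + B_{b-2} x^{b-2} + ⋯ + B_1 x + B_0` with coefficients
`B_j = Bc j` (only `j ≤ b - 2` is relevant). -/
def minPolyOf {S : Type*} [CommRing S] (b : ℕ) (Bc : ℕ → S) : Polynomial S :=
  Polynomial.X ^ b + ∑ j ∈ Finset.range (b - 1), Polynomial.C (Bc j) * Polynomial.X ^ j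


/-- The maximal ideal `(z_1, …, z_d)` of the polynomial ring `k[z_1, …, z_d]`
(the kernel of evaluation at the origin). -/
def mPoly (k : Type) [Field k] (d : ℕ) : Ideal (MvPolynomial (Fin d) k) :=
  RingHom.ker (MvPolynomial.aeval (fun _ => (0 : k)) : MvPolynomial (Fin d) k →ₐ[k] k)

instance {k : Type} [Field k] {d : ℕ} : (mPoly k d).IsMaximal :=
  RingHom.ker_isMaximal_of_surjective _ (fun a => ⟨MvPolynomial.C a, by simp⟩)

instance {k : Type} [Field k] {d : ℕ} : (mPoly k d).IsPrime :=
  (inferInstance : (mPoly k d).IsMaximal).isPrime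

/-- `IsSLoc k d S` says that `S` is (identified with) the localization of `k[z_1, …, z_d]`
at the maximal ideal `(z_1, …, z_d)`. -/
abbrev IsSLoc (k : Type) [Field k] (d : ℕ) (S : Type) [CommRing S]
    [Algebra (MvPolynomial (Fin d) k) S] : Prop :=
  IsLocalization.AtPrime S (mPoly k d)

/-- The element `z_j` of `S`. -/
def zvar (k : Type) [Field k] (d : ℕ) (S : Type) [CommRing S]
    [Algebra (MvPolynomial (Fin d) k) S] (j : Fin d) : S :=
  algebraMap (MvPolynomial (Fin d) k) S (MvPolynomial.X j)

/-- The maximal ideal `m = (z_1, …, z_d)` of the local ring `S`. -/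
def mS (k : Type) [Field k] (d : ℕ) (S : Type) [CommRing S]
    [Algebra (MvPolynomial (Fin d) k) S] : Ideal S :=
  (mPoly k d).map (algebraMap (MvPolynomial (Fin d) k) S)


section Statement10

variable (k : Type) [Field k] [CharZero k] (d : ℕ)
variable (S : Type) [CommRing S] [IsDomain S] [Algebra (MvPolynomial (Fin d) k) S]
  [Algebra k S] [IsScalarTower k (MvPolynomial (Fin d) k) S]

/-- `Diff(S[x][f W^b])`, the differential closure over `S[x]` of the Rees algebra
generated by `f W^b`, relative to the derivations `∂/∂x` (= `Dx`) and `∂/∂z_j` (= `Dz j`). -/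
def bigDiff (Dz : Fin d → Derivation k (Polynomial S) (Polynomial S))
    (Dx : Derivation k (Polynomial S) (Polynomial S)) (b : ℕ) (Bc : ℕ → S) :
    Subalgebra (Polynomial S) (Polynomial (Polynomial S)) :=
  diffClosure (fun o : Option (Fin d) => o.elim Dx Dz)
    {(Polynomial.C (minPolyOf b Bc) * Polynomial.X ^ b : Polynomial (Polynomial S))}

/-- `Diff(S[x][f W^b]) ∩ S[W]`, the elimination algebra over `S` of the hypersurface
`V(f)` relative to the projection forgetting `x`. -/
def elimOfBig (Dz : Fin d → Derivation k (Polynomial S) (Polynomial S))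
    (Dx : Derivation k (Polynomial S) (Polynomial S)) (b : ℕ) (Bc : ℕ → S) :
    Subalgebra S (Polynomial S) :=
  Subalgebra.comap (Polynomial.mapAlgHom (Algebra.ofId S (Polynomial S)))
    (Subalgebra.restrictScalars S (bigDiff k d S Dz Dx b Bc))

/-- `Diff_S(S[B_{b-2} W^2, …, B_0 W^b])`, the differential closure over `S`. -/
def elimOfCoeffs (DS : Fin d → Derivation k S S) (b : ℕ) (Bc : ℕ → S) :
    Subalgebra S (Polynomial S) :=
  diffClosure DS {p : Polynomial S | ∃ i ≤ b - 2,
    p = Polynomial.C (Bc i) * Polynomial.X ^ (b - i)}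

/-!
Before taking integral closures the two algebras are already equal. Write
`H = Diff_S(S[B_{b-2} W^2, …, B_0 W^b])` and `G = Diff(S[x][f W^b])`.

The algebra `H[x, xW]` is differentially closed, contains `f W^b`, and meets `S[W]` in `H`; hence
`G ∩ S[W] ⊆ H`. Conversely, the coefficient of `x^{b-1}` in `f` vanishes, so
`∂_x^{b-1} f = b! x` and `xW ∈ G`. Taylor's formula `p(0) = ∑_j (-x)^j ∂_x^j p / j!` then shows
that `p W^l ∈ G` implies `p(0) W^l ∈ G`. For `p = ∂_x^i f / i!` and `l = b - i`, where
`i ≤ b - 2`, this reads `B_i W^{b-i} ∈ G`.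
-/

section IdealFam

variable {R : Type*} [CommRing R] {G : Subalgebra R R[X]}

theorem mem_idealFam {l : ℕ} {r : R} : r ∈ idealFam G l ↔ C r * X ^ l ∈ G := by
  rw [C_mul_X_pow_eq_monomial]
  rfl

theorem idealFam_zero : idealFam G 0 = ⊤ :=
  (Ideal.eq_top_iff_one _).2 <| by simp [mem_idealFam]

instance : SetLike.GradedMonoid (idealFam G) where
  one_mem := idealFam_zero (G := G) ▸ Submodule.mem_top
  mul_mem l m r s hr hs := by
    rw [mem_idealFam] at *
    simpa only [C_mul, pow_add, mul_mul_mul_comm] using mul_mem hr hs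

theorem mem_of_forall_coeff_mem_idealFam {p : R[X]} (hp : ∀ n, p.coeff n ∈ idealFam G n) :
    p ∈ G := by
  rw [p.as_sum_range_C_mul_X_pow]
  exact sum_mem fun n _ => mem_idealFam.1 (hp n)

theorem Graded.coeff_mem_idealFam (hG : Graded G) {p : R[X]} (hp : p ∈ G) (n : ℕ) :
    p.coeff n ∈ idealFam G n :=
  mem_idealFam.2 (hG p hp n)

end IdealFam

section DiffClosure

variable {𝕜 R ι : Type*} [CommRing 𝕜] [CommRing R] [Algebra 𝕜 R] {D : ι → Derivation 𝕜 R R}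
  {G : Subalgebra R R[X]} {M : Set R[X]}

theorem DiffClosed.antitone_idealFam (hG : DiffClosed D G) : Antitone (idealFam G) := by
  refine antitone_nat_of_succ_le fun l r hr => ?_
  rcases l.eq_zero_or_pos with rfl | hl
  · rw [idealFam_zero]
    exact Submodule.mem_top
  · exact mem_idealFam.2 (hG.1 r l hl (mem_idealFam.1 hr))

theorem DiffClosed.derivation_mem_idealFam (hG : DiffClosed D G) (j : ι) {l : ℕ} {r : R}
    (hr : r ∈ idealFam G (l + 1)) : D j r ∈ idealFam G l :=
  mem_idealFam.2 (hG.2 r l j (mem_idealFam.1 hr))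

theorem DiffClosed.of_idealFam (hanti : Antitone (idealFam G))
    (hD : ∀ (j : ι) (l : ℕ), ∀ r ∈ idealFam G (l + 1), D j r ∈ idealFam G l) :
    DiffClosed D G :=
  ⟨fun _ l _ hr => mem_idealFam.1 (hanti l.le_succ (mem_idealFam.2 hr)),
    fun r l j hr => mem_idealFam.1 (hD j l r (mem_idealFam.2 hr))⟩

theorem subset_diffClosure : M ⊆ diffClosure D M := fun _ hp =>
  Algebra.mem_sInf.2 fun _ hG => hG.1 hp

theorem graded_diffClosure : Graded (diffClosure D M) := fun p hp n =>
  Algebra.mem_sInf.2 fun G hG => hG.2.1 p (Algebra.mem_sInf.1 hp G hG) n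

theorem diffClosed_diffClosure : DiffClosed D (diffClosure D M) :=
  ⟨fun f l hl hf => Algebra.mem_sInf.2 fun G hG => hG.2.2.1 f l hl (Algebra.mem_sInf.1 hf G hG),
    fun f l j hf => Algebra.mem_sInf.2 fun G hG => hG.2.2.2 f l j (Algebra.mem_sInf.1 hf G hG)⟩

theorem diffClosure_le (hM : M ⊆ G) (hgr : Graded G) (hG : DiffClosed D G) :
    diffClosure D M ≤ G :=
  sInf_le ⟨hM, hgr, hG⟩

end DiffClosure

section PolynomialDerivations

variable {𝕜 R : Type*} [CommRing 𝕜] [CommRing R] [Algebra 𝕜 R]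

theorem derivation_eq_derivative {Dx : Derivation 𝕜 R[X] R[X]} (hC : ∀ r, Dx (C r) = 0)
    (hX : Dx X = 1) (p : R[X]) : Dx p = derivative p := by
  induction p using Polynomial.induction_on' with
  | add p q hp hq => rw [map_add, map_add, hp, hq]
  | monomial n r =>
    rw [← C_mul_X_pow_eq_monomial, Derivation.leibniz, Derivation.leibniz_pow, hC, hX]
    simp [derivative_X_pow]

theorem coeff_derivation_apply {Dz : Derivation 𝕜 R[X] R[X]} {D : Derivation 𝕜 R R}
    (hC : ∀ r, Dz (C r) = C (D r)) (hX : Dz X = 0) (p : R[X]) (i : ℕ) :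
    (Dz p).coeff i = D (p.coeff i) := by
  induction p using Polynomial.induction_on' with
  | add p q hp hq => rw [map_add, coeff_add, coeff_add, map_add, hp, hq]
  | monomial n r =>
    rw [← C_mul_X_pow_eq_monomial, Derivation.leibniz, Derivation.leibniz_pow, hC, hX]
    simp [mul_comm (X ^ n), apply_ite D]

end PolynomialDerivations

section Contraction

variable {R : Type*} [CommRing R] {G G' : Subalgebra R[X] R[X][X]}

/-- The contraction `G ∩ R[W]` to `R` of an algebra `G ⊆ R[x][W]`; it turns a Rees algebra over
`R[x]` into its elimination algebra. Here `R[W]` sits in `R[x][W]` by mapping coefficients to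
constant polynomials. -/
def contraction (G : Subalgebra R[X] R[X][X]) : Subalgebra R R[X] :=
  (G.restrictScalars R).comap (mapAlgHom (Algebra.ofId R R[X]))

theorem mem_contraction {p : R[X]} : p ∈ contraction G ↔ p.map C ∈ G :=
  Iff.rfl

theorem contraction_mono (h : G ≤ G') : contraction G ≤ contraction G' := fun _ hp => h hp

theorem mem_idealFam_contraction {l : ℕ} {r : R} :
    r ∈ idealFam (contraction G) l ↔ C r ∈ idealFam G l := by
  simp [mem_idealFam, mem_contraction]

theorem Graded.contraction (hG : Graded G) : Graded (contraction G) := fun p hp n => by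
  rw [← mem_idealFam, mem_idealFam_contraction, ← coeff_map]
  exact hG.coeff_mem_idealFam (mem_contraction.1 hp) n

theorem DiffClosed.contraction {𝕜 ι κ : Type*} [CommRing 𝕜] [Algebra 𝕜 R]
    {D : ι → Derivation 𝕜 R R} {E : κ → Derivation 𝕜 R[X] R[X]}
    (hED : ∀ i, ∃ j, ∀ r, E j (C r) = C (D i r)) (hG : DiffClosed E G) :
    DiffClosed D (contraction G) := by
  refine .of_idealFam (fun l m hlm r hr => ?_) fun i l r hr => ?_
  · rw [mem_idealFam_contraction] at hr ⊢
    exact hG.antitone_idealFam hlm hr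
  · rw [mem_idealFam_contraction] at hr ⊢
    obtain ⟨j, hj⟩ := hED i
    exact hj r ▸ hG.derivation_mem_idealFam j hr

end Contraction

section AdjoinXW

variable {R : Type*} [CommRing R] {H : Subalgebra R R[X]}

/-- The algebra `⊕_l (∑_i I_{l-i} x^i) W^l` over `R[x]` generated by `H = ⊕_l I_l W^l` and `xW`.
The truncated subtraction is intended: `I_{l-i} = I_0 = R` for `i ≥ l`. -/
def adjoinXW (H : Subalgebra R R[X]) (hH : Antitone (idealFam H)) :
    Subalgebra R[X] R[X][X] where
  carrier := {P | ∀ l i, (P.coeff l).coeff i ∈ idealFam H (l - i)}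
  mul_mem' {P Q} hP hQ l i := by
    simp only [coeff_mul, finsetSum_coeff]
    refine sum_mem fun a ha => sum_mem fun c hc => ?_
    rw [Finset.HasAntidiagonal.mem_antidiagonal] at ha hc
    exact hH (by omega) (SetLike.mul_mem_graded (hP a.1 c.1) (hQ a.2 c.2))
  add_mem' hP hQ l i := by
    simpa only [coeff_add] using add_mem (hP l i) (hQ l i)
  algebraMap_mem' p l i := by
    rw [algebraMap_eq, coeff_C]
    split_ifs with hl
    · simp [hl, idealFam_zero]
    · simp

variable {hH : Antitone (idealFam H)}

theorem mem_idealFam_adjoinXW {l : ℕ} {p : R[X]} :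
    p ∈ idealFam (adjoinXW H hH) l ↔ ∀ i, p.coeff i ∈ idealFam H (l - i) := by
  rw [mem_idealFam]
  refine ⟨fun h i => by simpa using h l i, fun h m i => ?_⟩
  rw [coeff_C_mul_X_pow]
  split_ifs with hm
  · exact hm ▸ h i
  · simp

theorem graded_adjoinXW : Graded (adjoinXW H hH) := fun _ hP l =>
  mem_idealFam.1 (mem_idealFam_adjoinXW.2 (hP l))

theorem contraction_adjoinXW_le : contraction (adjoinXW H hH) ≤ H := fun p hp =>
  mem_of_forall_coeff_mem_idealFam fun n => by simpa using mem_contraction.1 hp n 0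

theorem antitone_idealFam_adjoinXW : Antitone (idealFam (adjoinXW H hH)) :=
  fun _ _ hlm _ hp => mem_idealFam_adjoinXW.2 fun i =>
    hH (Nat.sub_le_sub_right hlm i) (mem_idealFam_adjoinXW.1 hp i)

theorem derivative_mem_idealFam_adjoinXW {l : ℕ} {p : R[X]}
    (hp : p ∈ idealFam (adjoinXW H hH) (l + 1)) :
    derivative p ∈ idealFam (adjoinXW H hH) l := by
  rw [mem_idealFam_adjoinXW] at hp ⊢
  intro i
  rw [coeff_derivative]
  exact Ideal.mul_mem_right _ _ (by simpa using hp (i + 1))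

theorem mem_idealFam_adjoinXW_of_coeff_eq {l : ℕ} {δ : R → R}
    (hδ : ∀ m, ∀ r ∈ idealFam H (m + 1), δ r ∈ idealFam H m) {p q : R[X]}
    (hp : p ∈ idealFam (adjoinXW H hH) (l + 1)) (hq : ∀ i, q.coeff i = δ (p.coeff i)) :
    q ∈ idealFam (adjoinXW H hH) l := by
  rw [mem_idealFam_adjoinXW] at hp ⊢
  intro i
  rcases le_or_gt i l with hi | hi
  · rw [hq]
    exact hδ _ _ (Nat.sub_add_comm hi ▸ hp i)
  · simp [Nat.sub_eq_zero_of_le hi.le, idealFam_zero]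

end AdjoinXW

section TaylorExpansion

variable {R : Type*} [CommRing R]

theorem isUnit_natCast_factorial_of_le {m n : ℕ} (hmn : m ≤ n) (hn : IsUnit (n.factorial : R)) :
    IsUnit (m.factorial : R) :=
  isUnit_of_dvd_unit (Nat.cast_dvd_cast (Nat.factorial_dvd_factorial hmn)) hn

theorem C_coeff_zero_eq_sum_hasseDeriv (p : R[X]) :
    C (p.coeff 0) = ∑ j ∈ Finset.range (p.natDegree + 1), hasseDeriv j p * (-X) ^ j := by
  have htaylor : (taylor X (p.map C)).eval (-X) = C (p.coeff 0) := by
    rw [taylor_eval, neg_add_cancel, ← coeff_zero_eq_eval_zero, coeff_map]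
  have hcoeff (j : ℕ) : (taylor X (p.map C)).coeff j = hasseDeriv j p := by
    have hmap : hasseDeriv j (p.map C) = (hasseDeriv j p).map C := by
      ext1 n
      simp [hasseDeriv_coeff]
    rw [taylor_coeff, hmap, eval_map, eval₂_C_X]
  rw [← htaylor, eval_eq_sum_range, natDegree_taylor, natDegree_map_eq_of_injective C_injective]
  exact Finset.sum_congr rfl fun j _ => by rw [hcoeff]

variable {G : Subalgebra R[X] R[X][X]}

theorem iterate_derivative_mem_idealFam
    (hder : ∀ l, ∀ p ∈ idealFam G (l + 1), derivative p ∈ idealFam G l) {l m : ℕ} {p : R[X]}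
    (hp : p ∈ idealFam G (l + m)) : derivative^[m] p ∈ idealFam G l := by
  induction m generalizing p with
  | zero => exact hp
  | succ m ih => exact ih (hder _ p hp)

theorem hasseDeriv_mem_idealFam
    (hder : ∀ l, ∀ p ∈ idealFam G (l + 1), derivative p ∈ idealFam G l) {l m : ℕ}
    (hm : IsUnit (m.factorial : R)) {p : R[X]} (hp : p ∈ idealFam G (l + m)) :
    hasseDeriv m p ∈ idealFam G l := by
  have hunit : IsUnit (m.factorial : R[X]) := by simpa using hm.map C
  have hiter := iterate_derivative_mem_idealFam hder hp
  rwa [← factorial_smul_hasseDeriv, LinearMap.smul_apply, nsmul_eq_mul,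
    Ideal.unit_mul_mem_iff_mem _ hunit] at hiter

theorem hasseDeriv_eq_C_mul_X {f : R[X]} {n : ℕ} (hdeg : f.natDegree ≤ n + 1)
    (hnext : f.coeff n = 0) : hasseDeriv n f = C ((n + 1) * f.coeff (n + 1)) * X := by
  ext i
  rw [hasseDeriv_coeff, coeff_C_mul, coeff_X]
  rcases lt_trichotomy i 1 with hi | rfl | hi
  · simp [Nat.lt_one_iff.1 hi, hnext]
  · simp [add_comm 1 n, Nat.choose_succ_self_right]
  · simp [coeff_eq_zero_of_natDegree_lt (hdeg.trans_lt (by omega : n + 1 < i + n)), hi.ne]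

theorem X_mem_idealFam_one
    (hder : ∀ l, ∀ p ∈ idealFam G (l + 1), derivative p ∈ idealFam G l) {b : ℕ} (hb : b ≠ 0)
    (hfact : IsUnit (b.factorial : R)) {f : R[X]} (hdeg : f.natDegree ≤ b)
    (hlead : IsUnit (f.coeff b)) (hnext : f.coeff (b - 1) = 0) (hf : f ∈ idealFam G b) :
    X ∈ idealFam G 1 := by
  obtain ⟨n, rfl⟩ := Nat.exists_eq_succ_of_ne_zero hb
  have hsucc : IsUnit (n + 1 : R) := by
    rw [Nat.factorial_succ, Nat.cast_mul] at hfact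
    exact_mod_cast isUnit_of_mul_isUnit_left hfact
  have hmem : hasseDeriv n f ∈ idealFam G 1 :=
    hasseDeriv_mem_idealFam hder (isUnit_natCast_factorial_of_le n.le_succ hfact)
      (add_comm n 1 ▸ hf)
  rwa [hasseDeriv_eq_C_mul_X hdeg hnext,
    Ideal.unit_mul_mem_iff_mem _ ((hsucc.mul hlead).map C)] at hmem

theorem C_coeff_zero_mem_idealFam (hanti : Antitone (idealFam G))
    (hder : ∀ l, ∀ p ∈ idealFam G (l + 1), derivative p ∈ idealFam G l)
    (hX : X ∈ idealFam G 1) {l : ℕ} (hl : IsUnit (l.factorial : R)) {p : R[X]}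
    (hp : p ∈ idealFam G l) : C (p.coeff 0) ∈ idealFam G l := by
  rw [C_coeff_zero_eq_sum_hasseDeriv]
  refine sum_mem fun j _ => ?_
  have hXj : (-X) ^ j ∈ idealFam G j := by
    simpa using SetLike.pow_mem_graded j (neg_mem hX)
  rcases le_total j l with hj | hj
  · have hpj : hasseDeriv j p ∈ idealFam G (l - j) :=
      hasseDeriv_mem_idealFam hder (isUnit_natCast_factorial_of_le hj hl)
        (by rwa [Nat.sub_add_cancel hj])
    simpa [Nat.sub_add_cancel hj] using SetLike.mul_mem_graded hpj hXj
  · exact Ideal.mul_mem_left _ _ (hanti hj hXj)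

theorem C_coeff_mem_idealFam (hanti : Antitone (idealFam G))
    (hder : ∀ l, ∀ p ∈ idealFam G (l + 1), derivative p ∈ idealFam G l)
    (hX : X ∈ idealFam G 1) {l i : ℕ} (hfact : IsUnit ((l + i).factorial : R)) {p : R[X]}
    (hp : p ∈ idealFam G (l + i)) : C (p.coeff i) ∈ idealFam G l := by
  have hpi : hasseDeriv i p ∈ idealFam G l :=
    hasseDeriv_mem_idealFam hder (isUnit_natCast_factorial_of_le (i.le_add_left l) hfact) hp
  simpa [hasseDeriv_coeff] using C_coeff_zero_mem_idealFam hanti hder hX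
    (isUnit_natCast_factorial_of_le (l.le_add_right i) hfact) hpi

end TaylorExpansion

section MinPolyOf

variable {R : Type*} [CommRing R] {b : ℕ} {B : ℕ → R}

theorem coeff_minPolyOf (n : ℕ) :
    (minPolyOf b B).coeff n = (if n = b then 1 else 0) + if n < b - 1 then B n else 0 := by
  simp [minPolyOf, coeff_X_pow, finsetSum_coeff]

theorem natDegree_minPolyOf_le : (minPolyOf b B).natDegree ≤ b :=
  natDegree_le_iff_coeff_eq_zero.2 fun n hn => by
    rw [coeff_minPolyOf, if_neg (by omega), if_neg (by omega), add_zero]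

theorem coeff_minPolyOf_self : (minPolyOf b B).coeff b = 1 := by
  rw [coeff_minPolyOf, if_pos rfl, if_neg (by omega), add_zero]

theorem coeff_minPolyOf_sub_one (hb : b ≠ 0) : (minPolyOf b B).coeff (b - 1) = 0 := by
  rw [coeff_minPolyOf, if_neg (by omega), if_neg (by omega), add_zero]

theorem coeff_minPolyOf_of_lt {i : ℕ} (hi : i < b - 1) : (minPolyOf b B).coeff i = B i := by
  rw [coeff_minPolyOf, if_neg (by omega), if_pos hi, zero_add]

theorem coeff_minPolyOf_mem_idealFam {H : Subalgebra R R[X]}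
    (hB : ∀ i ≤ b - 2, B i ∈ idealFam H (b - i)) (i : ℕ) :
    (minPolyOf b B).coeff i ∈ idealFam H (b - i) := by
  rw [coeff_minPolyOf]
  refine add_mem ?_ ?_
  · split_ifs with hi
    · simp [hi, idealFam_zero]
    · exact zero_mem _
  · split_ifs with hi
    · exact hB i (by omega)
    · exact zero_mem _

end MinPolyOf

section Elimination

variable {𝕜 R ι : Type*} [CommRing 𝕜] [CommRing R] [Algebra 𝕜 R] {D : ι → Derivation 𝕜 R R}
  {Dz : ι → Derivation 𝕜 R[X] R[X]} {Dx : Derivation 𝕜 R[X] R[X]}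

theorem diffClosed_adjoinXW (hDzC : ∀ j r, Dz j (C r) = C (D j r)) (hDzX : ∀ j, Dz j X = 0)
    (hDxC : ∀ r, Dx (C r) = 0) (hDxX : Dx X = 1) {H : Subalgebra R R[X]} (hH : DiffClosed D H) :
    DiffClosed (fun o : Option ι => o.elim Dx Dz) (adjoinXW H hH.antitone_idealFam) := by
  refine .of_idealFam antitone_idealFam_adjoinXW fun o l p hp => ?_
  cases o with
  | none =>
    rw [Option.elim_none, derivation_eq_derivative hDxC hDxX]
    exact derivative_mem_idealFam_adjoinXW hp
  | some j =>
    exact mem_idealFam_adjoinXW_of_coeff_eq (fun _ _ => hH.derivation_mem_idealFam j) hp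
      (coeff_derivation_apply (hDzC j) (hDzX j) p)

theorem contraction_diffClosure_le (hDzC : ∀ j r, Dz j (C r) = C (D j r))
    (hDzX : ∀ j, Dz j X = 0) (hDxC : ∀ r, Dx (C r) = 0) (hDxX : Dx X = 1) {b : ℕ} {f : R[X]}
    {H : Subalgebra R R[X]} (hH : DiffClosed D H) (hf : ∀ i, f.coeff i ∈ idealFam H (b - i)) :
    contraction (diffClosure (fun o : Option ι => o.elim Dx Dz) {C f * X ^ b}) ≤ H := by
  have hle : diffClosure (fun o : Option ι => o.elim Dx Dz) {C f * X ^ b} ≤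
      adjoinXW H hH.antitone_idealFam :=
    diffClosure_le (Set.singleton_subset_iff.2 (mem_idealFam.1 (mem_idealFam_adjoinXW.2 hf)))
      graded_adjoinXW (diffClosed_adjoinXW hDzC hDzX hDxC hDxX hH)
  exact (contraction_mono hle).trans contraction_adjoinXW_le

theorem coeff_mem_idealFam_contraction (hDxC : ∀ r, Dx (C r) = 0) (hDxX : Dx X = 1) {b : ℕ}
    (hb : b ≠ 0) (hfact : IsUnit (b.factorial : R)) {f : R[X]} (hdeg : f.natDegree ≤ b)
    (hlead : IsUnit (f.coeff b)) (hnext : f.coeff (b - 1) = 0) {G : Subalgebra R[X] R[X][X]}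
    (hG : DiffClosed (fun o : Option ι => o.elim Dx Dz) G) (hf : f ∈ idealFam G b) {i : ℕ}
    (hi : i ≤ b) : f.coeff i ∈ idealFam (contraction G) (b - i) := by
  have hder (l : ℕ) (p : R[X]) (hp : p ∈ idealFam G (l + 1)) : derivative p ∈ idealFam G l :=
    derivation_eq_derivative hDxC hDxX p ▸ hG.derivation_mem_idealFam none hp
  have hX : X ∈ idealFam G 1 := X_mem_idealFam_one hder hb hfact hdeg hlead hnext hf
  rw [← Nat.sub_add_cancel hi] at hfact hf
  exact mem_idealFam_contraction.2 (C_coeff_mem_idealFam hG.antitone_idealFam hder hX hfact hf)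

theorem elimination_algebra_of_hypersurface_up_to_integral_closure_general
    (hDzC : ∀ j r, Dz j (C r) = C (D j r)) (hDzX : ∀ j, Dz j X = 0)
    (hDxC : ∀ r, Dx (C r) = 0) (hDxX : Dx X = 1) {b : ℕ} (hb : 2 ≤ b)
    (hfact : IsUnit (b.factorial : R)) (B : ℕ → R) :
    contraction (diffClosure (fun o : Option ι => o.elim Dx Dz) {C (minPolyOf b B) * X ^ b}) =
      diffClosure D {p | ∃ i ≤ b - 2, p = C (B i) * X ^ (b - i)} := by
  apply le_antisymm
  · exact contraction_diffClosure_le hDzC hDzX hDxC hDxX diffClosed_diffClosure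
      (coeff_minPolyOf_mem_idealFam fun i hi => mem_idealFam.2 (subset_diffClosure ⟨i, hi, rfl⟩))
  · refine diffClosure_le ?_ graded_diffClosure.contraction
      (diffClosed_diffClosure.contraction fun j => ⟨some j, hDzC j⟩)
    rintro _ ⟨i, hi, rfl⟩
    have hb0 : b ≠ 0 := by omega
    have hcoeff := coeff_mem_idealFam_contraction hDxC hDxX hb0 hfact natDegree_minPolyOf_le
      (coeff_minPolyOf_self (B := B) ▸ isUnit_one) (coeff_minPolyOf_sub_one hb0)
      (diffClosed_diffClosure (D := fun o : Option ι => o.elim Dx Dz))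
      (mem_idealFam.2 (subset_diffClosure (Set.mem_singleton _))) (show i ≤ b by omega)
    rw [coeff_minPolyOf_of_lt (by omega)] at hcoeff
    exact mem_idealFam.1 hcoeff

end Elimination

/-- (Lemma `lema:generadores_algebra2`.)  For `f = x^b + B_{b-2} x^{b-2} + ⋯ + B_0 ∈ S[x]`,
the Rees algebra `Diff(S[x][f W^b]) ∩ S[W]` over `S` (the elimination algebra of the
hypersurface `V(f)` relative to the projection forgetting `x`) coincides, up to integral
closure inside `Frac(S)[W]`, with `Diff_S(S[B_{b-2} W^2, …, B_0 W^b])`: the two have the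
same integral closure in `Frac(S)[W]`. -/
theorem elimination_algebra_of_hypersurface_up_to_integral_closure
    [IsSLoc k d S] (hd : 1 ≤ d)
    (DS : Fin d → Derivation k S S)
    (hDS : ∀ i j : Fin d, DS j (zvar k d S i) = if i = j then 1 else 0)
    (Dz : Fin d → Derivation k (Polynomial S) (Polynomial S))
    (hDzC : ∀ (j : Fin d) (s : S), Dz j (Polynomial.C s) = Polynomial.C (DS j s))
    (hDzX : ∀ j : Fin d, Dz j (Polynomial.X : Polynomial S) = 0)
    (Dx : Derivation k (Polynomial S) (Polynomial S))
    (hDxC : ∀ s : S, Dx (Polynomial.C s) = 0)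
    (hDxX : Dx (Polynomial.X : Polynomial S) = 1)
    (b : ℕ) (hb : 2 ≤ b) (Bc : ℕ → S) :
    intClos (Subalgebra.map (Polynomial.mapAlgHom (Algebra.ofId S (FractionRing S)))
        (elimOfBig k d S Dz Dx b Bc) : Set (Polynomial (FractionRing S))) =
      intClos (Subalgebra.map (Polynomial.mapAlgHom (Algebra.ofId S (FractionRing S)))
        (elimOfCoeffs k d S DS b Bc) : Set (Polynomial (FractionRing S))) := by
  have hfact : IsUnit (b.factorial : S) := by
    simpa using (IsUnit.mk0 (b.factorial : k) (mod_cast b.factorial_ne_zero)).map (algebraMap k S)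
  rw [show elimOfBig k d S Dz Dx b Bc = elimOfCoeffs k d S DS b Bc from
    elimination_algebra_of_hypersurface_up_to_integral_closure_general
      hDzC hDzX hDxC hDxX hb hfact Bc]

end Statement10

end NashMult
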